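/- arXiv:1902.03060 — 5 statements merged into one kernel-verified Lean document; each statement's English description precedes it below -/
import Mathlib

section
/- The following conditions are equivalent: (1) H(Σ) is finite dimensional; (2) H(Π) is finite dimensional; (3) ker P̂ i = ran Q̂ i for all but finitely many i ∈ ι. In that case dim H(Π) = dim H(Σ) = ∑_{i∈ι} dim(ker P̂ i / ran Q̂ i). -/
noncomputable section

open Submodule

variable {ι : Type*}

/-- The submodule of finitely supported families in a product of `ℂ`-modules. -/
def finSupp (F : ι → Type*) [∀ i, AddCommGroup (F i)] [∀ i, Module ℂ (F i)] :
    Submodule ℂ (∀ i, F i) where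
  carrier := {a | {i | a i ≠ 0}.Finite}
  zero_mem' := by
    simp
  add_mem' := by
    intro a b ha hb
    refine (ha.union hb).subset fun i hi => ?_
    simp only [Set.mem_setOf_eq, Set.mem_union] at hi ⊢
    by_contra h
    push_neg at h
    exact hi (by simp [h.1, h.2])
  smul_mem' := by
    intro c a ha
    refine ha.subset fun i hi => ?_
    simp only [Set.mem_setOf_eq] at hi ⊢
    intro h
    exact hi (by simp [h])

/-- The componentwise linear map induced by a family of linear maps. -/
def pwMap {F G : ι → Type*} [∀ i, AddCommGroup (F i)] [∀ i, Module ℂ (F i)]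
    [∀ i, AddCommGroup (G i)] [∀ i, Module ℂ (G i)]
    (T : ∀ i, F i →ₗ[ℂ] G i) : (∀ i, F i) →ₗ[ℂ] (∀ i, G i) where
  toFun u i := T i (u i)
  map_add' u v := by funext i; simp
  map_smul' c u := by funext i; simp

@[simp] theorem pwMap_apply {F G : ι → Type*} [∀ i, AddCommGroup (F i)] [∀ i, Module ℂ (F i)]
    [∀ i, AddCommGroup (G i)] [∀ i, Module ℂ (G i)]
    (T : ∀ i, F i →ₗ[ℂ] G i) (u : ∀ i, F i) (i : ι) : pwMap T u i = T i (u i) := rfl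

/-- The `k`-th power `V^k` of a subspace `V ⊆ Π`, inside `∏ i, (E i)^k`. -/
def Vpow {E : ι → Type*} [∀ i, AddCommGroup (E i)] [∀ i, Module ℂ (E i)]
    (V : Submodule ℂ (∀ i, E i)) (k : ℕ) : Submodule ℂ (∀ i, Fin k → E i) where
  carrier := {u | ∀ j : Fin k, (fun i => u i j) ∈ V}
  zero_mem' := fun _ => V.zero_mem
  add_mem' := fun ha hb j => V.add_mem (ha j) (hb j)
  smul_mem' := fun c _a ha j => V.smul_mem c (ha j)

theorem Vpow_mono {E : ι → Type*} [∀ i, AddCommGroup (E i)] [∀ i, Module ℂ (E i)]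
    {V W : Submodule ℂ (∀ i, E i)} (h : V ≤ W) (k : ℕ) : Vpow V k ≤ Vpow W k :=
  fun _ hu j => h (hu j)

section Coh

variable {E : ι → Type*} [∀ i, AddCommGroup (E i)] [∀ i, Module ℂ (E i)] {r m n : ℕ}

/-- The local cohomology space `ker P̂ i / ran Q̂ i`. -/
abbrev locCoh (Qh : ∀ i, (Fin r → E i) →ₗ[ℂ] (Fin m → E i))
    (Ph : ∀ i, (Fin m → E i) →ₗ[ℂ] (Fin n → E i)) (i : ι) : Type _ :=
  ↥(LinearMap.ker (Ph i)) ⧸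
    ((LinearMap.range (Qh i)).comap (LinearMap.ker (Ph i)).subtype)

/-- `ker (P : V^m → V^n)` as a submodule of `Π^m`. -/
abbrev cohKer (Ph : ∀ i, (Fin m → E i) →ₗ[ℂ] (Fin n → E i))
    (V : Submodule ℂ (∀ i, E i)) : Submodule ℂ (∀ i, Fin m → E i) :=
  Vpow V m ⊓ LinearMap.ker (pwMap Ph)

/-- `ran (Q : V^r → V^m)` as a submodule of `Π^m`. -/
abbrev cohRan (Qh : ∀ i, (Fin r → E i) →ₗ[ℂ] (Fin m → E i))
    (V : Submodule ℂ (∀ i, E i)) : Submodule ℂ (∀ i, Fin m → E i) :=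
  (Vpow V r).map (pwMap Qh)

/-- The cohomology `H(V) = ker (P : V^m → V^n) / ran (Q : V^r → V^m)`. -/
abbrev coh (Qh : ∀ i, (Fin r → E i) →ₗ[ℂ] (Fin m → E i))
    (Ph : ∀ i, (Fin m → E i) →ₗ[ℂ] (Fin n → E i))
    (V : Submodule ℂ (∀ i, E i)) : Type _ :=
  ↥(cohKer Ph V) ⧸ ((cohRan Qh V).comap (cohKer Ph V).subtype)

theorem kerMem (Ph : ∀ i, (Fin m → E i) →ₗ[ℂ] (Fin n → E i))
    {V : Submodule ℂ (∀ i, E i)} (a : ↥(cohKer Ph V)) (i : ι) :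
    (a : ∀ j, Fin m → E j) i ∈ LinearMap.ker (Ph i) := by
  have h : pwMap Ph (a : ∀ j, Fin m → E j) = 0 :=
    LinearMap.mem_ker.mp (Submodule.mem_inf.mp a.2).2
  exact LinearMap.mem_ker.mpr (by simpa using congrFun h i)

/-- The map `H(V) → H(W)` induced by an inclusion `V ⊆ W`. -/
def cohMap (Qh : ∀ i, (Fin r → E i) →ₗ[ℂ] (Fin m → E i))
    (Ph : ∀ i, (Fin m → E i) →ₗ[ℂ] (Fin n → E i))
    {V W : Submodule ℂ (∀ i, E i)} (h : V ≤ W) :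
    coh Qh Ph V →ₗ[ℂ] coh Qh Ph W :=
  Submodule.mapQ _ _ (Submodule.inclusion (inf_le_inf_right _ (Vpow_mono h m)))
    (by
      intro x hx
      simp only [Submodule.mem_comap] at hx ⊢
      exact Submodule.map_mono (Vpow_mono h r) hx)

end Coh

section Helpers

variable {E : ι → Type*} [∀ i, AddCommGroup (E i)] [∀ i, Module ℂ (E i)] {r m n : ℕ}

/-- A sealed copy of the local cohomology space. -/
def Loc (Qh : ∀ i, (Fin r → E i) →ₗ[ℂ] (Fin m → E i))
    (Ph : ∀ i, (Fin m → E i) →ₗ[ℂ] (Fin n → E i)) (i : ι) : Type _ :=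
  locCoh Qh Ph i

instance (Qh : ∀ i, (Fin r → E i) →ₗ[ℂ] (Fin m → E i))
    (Ph : ∀ i, (Fin m → E i) →ₗ[ℂ] (Fin n → E i)) (i : ι) :
    AddCommGroup (Loc Qh Ph i) :=
  inferInstanceAs (AddCommGroup (locCoh Qh Ph i))

instance (Qh : ∀ i, (Fin r → E i) →ₗ[ℂ] (Fin m → E i))
    (Ph : ∀ i, (Fin m → E i) →ₗ[ℂ] (Fin n → E i)) (i : ι) :
    Module ℂ (Loc Qh Ph i) :=
  inferInstanceAs (Module ℂ (locCoh Qh Ph i))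

instance [∀ i, FiniteDimensional ℂ (E i)] (Qh : ∀ i, (Fin r → E i) →ₗ[ℂ] (Fin m → E i))
    (Ph : ∀ i, (Fin m → E i) →ₗ[ℂ] (Fin n → E i)) (i : ι) :
    FiniteDimensional ℂ (Loc Qh Ph i) :=
  inferInstanceAs (FiniteDimensional ℂ (locCoh Qh Ph i))

/-- The product of finitely many local cohomology spaces. -/
def Tgt (Qh : ∀ i, (Fin r → E i) →ₗ[ℂ] (Fin m → E i))
    (Ph : ∀ i, (Fin m → E i) →ₗ[ℂ] (Fin n → E i)) (S : Finset ι) : Type _ :=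
  ∀ i : S, Loc Qh Ph i

instance (Qh : ∀ i, (Fin r → E i) →ₗ[ℂ] (Fin m → E i))
    (Ph : ∀ i, (Fin m → E i) →ₗ[ℂ] (Fin n → E i)) (S : Finset ι) :
    AddCommGroup (Tgt Qh Ph S) :=
  inferInstanceAs (AddCommGroup (∀ i : S, Loc Qh Ph i))

instance (Qh : ∀ i, (Fin r → E i) →ₗ[ℂ] (Fin m → E i))
    (Ph : ∀ i, (Fin m → E i) →ₗ[ℂ] (Fin n → E i)) (S : Finset ι) :
    Module ℂ (Tgt Qh Ph S) :=
  inferInstanceAs (Module ℂ (∀ i : S, Loc Qh Ph i))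

instance [∀ i, FiniteDimensional ℂ (E i)] (Qh : ∀ i, (Fin r → E i) →ₗ[ℂ] (Fin m → E i))
    (Ph : ∀ i, (Fin m → E i) →ₗ[ℂ] (Fin n → E i)) (S : Finset ι) :
    FiniteDimensional ℂ (Tgt Qh Ph S) :=
  inferInstanceAs (FiniteDimensional ℂ (∀ i : S, Loc Qh Ph i))

theorem finrank_Tgt [∀ i, FiniteDimensional ℂ (E i)]
    (Qh : ∀ i, (Fin r → E i) →ₗ[ℂ] (Fin m → E i))
    (Ph : ∀ i, (Fin m → E i) →ₗ[ℂ] (Fin n → E i)) (S : Finset ι) :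
    Module.finrank ℂ (Tgt Qh Ph S) = ∑ i : S, Module.finrank ℂ (locCoh Qh Ph i) :=
  Module.finrank_pi_fintype (M := fun i : S => Loc Qh Ph i) ℂ

/-- The restriction of a cohomology class to finitely many indices, at cocycle level. -/
def cohPre (Qh : ∀ i, (Fin r → E i) →ₗ[ℂ] (Fin m → E i))
    (Ph : ∀ i, (Fin m → E i) →ₗ[ℂ] (Fin n → E i))
    (V : Submodule ℂ (∀ i, E i)) (S : Finset ι) :
    ↥(cohKer Ph V) →ₗ[ℂ] Tgt Qh Ph S :=
  LinearMap.pi (φ := fun i : S => Loc Qh Ph i) fun i =>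
    (Submodule.mkQ ((LinearMap.range (Qh i)).comap (LinearMap.ker (Ph i)).subtype)).comp
      (LinearMap.codRestrict (LinearMap.ker (Ph i))
        ((LinearMap.proj (i : ι)).comp (cohKer Ph V).subtype) (fun a => kerMem Ph a i))

theorem cohPre_eq_zero (Qh : ∀ i, (Fin r → E i) →ₗ[ℂ] (Fin m → E i))
    (Ph : ∀ i, (Fin m → E i) →ₗ[ℂ] (Fin n → E i))
    (V : Submodule ℂ (∀ i, E i)) (S : Finset ι) (a : ↥(cohKer Ph V)) :
    cohPre Qh Ph V S a = 0 ↔ ∀ i ∈ S, (a : ∀ j, Fin m → E j) i ∈ LinearMap.range (Qh i) := by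
  refine (funext_iff (β := fun i : S => Loc Qh Ph i)).trans ?_
  rw [Subtype.forall]
  refine forall₂_congr fun i hi => ?_
  exact Submodule.Quotient.mk_eq_zero _

theorem cohPre_le (Qh : ∀ i, (Fin r → E i) →ₗ[ℂ] (Fin m → E i))
    (Ph : ∀ i, (Fin m → E i) →ₗ[ℂ] (Fin n → E i))
    (V : Submodule ℂ (∀ i, E i)) (S : Finset ι) :
    (cohRan Qh V).comap (cohKer Ph V).subtype ≤ LinearMap.ker (cohPre Qh Ph V S) := by
  intro a ha
  rw [LinearMap.mem_ker, cohPre_eq_zero]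
  obtain ⟨u, _, hu⟩ := ha
  intro i _
  exact ⟨u i, congrFun hu i⟩

/-- The restriction of a cohomology class to finitely many indices. -/
def cohRes (Qh : ∀ i, (Fin r → E i) →ₗ[ℂ] (Fin m → E i))
    (Ph : ∀ i, (Fin m → E i) →ₗ[ℂ] (Fin n → E i))
    (V : Submodule ℂ (∀ i, E i)) (S : Finset ι) :
    coh Qh Ph V →ₗ[ℂ] Tgt Qh Ph S :=
  Submodule.liftQ ((cohRan Qh V).comap (cohKer Ph V).subtype) (cohPre Qh Ph V S) (cohPre_le Qh Ph V S)

theorem cohRes_surj (Qh : ∀ i, (Fin r → E i) →ₗ[ℂ] (Fin m → E i))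
    (Ph : ∀ i, (Fin m → E i) →ₗ[ℂ] (Fin n → E i))
    (V : Submodule ℂ (∀ i, E i)) (hV : finSupp E ≤ V) (S : Finset ι) :
    Function.Surjective (cohRes Qh Ph V S) := by
  classical
  intro y
  choose x hx using fun i : S => Submodule.mkQ_surjective _ (y i)
  let a : ∀ i, Fin m → E i := fun i => if h : i ∈ S then (x ⟨i, h⟩ : Fin m → E i) else 0
  have ha : a ∈ cohKer Ph V := by
    refine Submodule.mem_inf.mpr ⟨fun j => hV ?_, ?_⟩
    · refine S.finite_toSet.subset fun i hi => ?_
      by_contra h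
      have h' : i ∉ S := h
      exact hi (by simp [a, h'])
    · rw [LinearMap.mem_ker]
      funext i
      by_cases h : i ∈ S
      · have := (x ⟨i, h⟩).2
        rw [LinearMap.mem_ker] at this
        simpa [a, h] using this
      · simp [a, h]
  refine ⟨Submodule.Quotient.mk ⟨a, ha⟩, ?_⟩
  funext i
  rw [← hx i]
  refine congrArg (Submodule.mkQ _) (Subtype.ext ?_)
  change a i = _
  simp [a]

theorem cohRes_inj (Qh : ∀ i, (Fin r → E i) →ₗ[ℂ] (Fin m → E i))
    (Ph : ∀ i, (Fin m → E i) →ₗ[ℂ] (Fin n → E i))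
    (V : Submodule ℂ (∀ i, E i))
    (hV : ∀ a ∈ Vpow V m, ∀ u : ∀ i, Fin r → E i, (∀ i, a i = 0 → u i = 0) → u ∈ Vpow V r)
    (S : Finset ι) (hS : ∀ i, i ∉ S → LinearMap.ker (Ph i) = LinearMap.range (Qh i)) :
    Function.Injective (cohRes Qh Ph V S) := by
  rw [injective_iff_map_eq_zero]
  intro c hc
  obtain ⟨a, rfl⟩ := Submodule.mkQ_surjective _ c
  have h0 : cohPre Qh Ph V S a = 0 := hc
  rw [cohPre_eq_zero] at h0
  have h1 : ∀ i, ∃ u, Qh i u = (a : ∀ j, Fin m → E j) i ∧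
      ((a : ∀ j, Fin m → E j) i = 0 → u = 0) := by
    intro i
    by_cases hz : (a : ∀ j, Fin m → E j) i = 0
    · exact ⟨0, by simp [hz], fun _ => rfl⟩
    · have : (a : ∀ j, Fin m → E j) i ∈ LinearMap.range (Qh i) := by
        by_cases h : i ∈ S
        · exact h0 i h
        · rw [← hS i h]
          exact kerMem Ph a i
      obtain ⟨u, hu⟩ := this
      exact ⟨u, hu, fun h => absurd h hz⟩
  choose u hu hu0 using h1
  refine (Submodule.Quotient.mk_eq_zero _).mpr ?_
  exact ⟨u, hV _ (Submodule.mem_inf.mp a.2).1 u hu0, funext hu⟩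

theorem coh_main [∀ i, FiniteDimensional ℂ (E i)]
    (Qh : ∀ i, (Fin r → E i) →ₗ[ℂ] (Fin m → E i))
    (Ph : ∀ i, (Fin m → E i) →ₗ[ℂ] (Fin n → E i))
    (hPQ : ∀ i, (Ph i).comp (Qh i) = 0)
    (V : Submodule ℂ (∀ i, E i)) (hV : finSupp E ≤ V)
    (hV' : ∀ a ∈ Vpow V m, ∀ u : ∀ i, Fin r → E i, (∀ i, a i = 0 → u i = 0) → u ∈ Vpow V r) :
    (FiniteDimensional ℂ (coh Qh Ph V) ↔
        {i | LinearMap.ker (Ph i) ≠ LinearMap.range (Qh i)}.Finite) ∧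
    ({i | LinearMap.ker (Ph i) ≠ LinearMap.range (Qh i)}.Finite →
        Module.finrank ℂ (coh Qh Ph V) = ∑ᶠ i, Module.finrank ℂ (locCoh Qh Ph i)) := by
  classical
  have hpos : ∀ i, LinearMap.ker (Ph i) ≠ LinearMap.range (Qh i) →
      1 ≤ Module.finrank ℂ (locCoh Qh Ph i) := by
    intro i hi
    have : Nontrivial (locCoh Qh Ph i) := by
      rw [Submodule.Quotient.nontrivial_iff]
      intro h
      apply hi
      apply le_antisymm
      · exact Submodule.comap_subtype_eq_top.mp h
      · exact LinearMap.range_le_ker_iff.mpr (hPQ i)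
    exact Module.finrank_pos
  have hzero : ∀ i, LinearMap.ker (Ph i) = LinearMap.range (Qh i) →
      Module.finrank ℂ (locCoh Qh Ph i) = 0 := by
    intro i hi
    have : Subsingleton (locCoh Qh Ph i) := by
      rw [Submodule.Quotient.subsingleton_iff]
      exact Submodule.comap_subtype_eq_top.mpr hi.le
    exact Module.finrank_zero_of_subsingleton
  have hS : ∀ h : {i | LinearMap.ker (Ph i) ≠ LinearMap.range (Qh i)}.Finite,
      ∀ i, i ∉ h.toFinset → LinearMap.ker (Ph i) = LinearMap.range (Qh i) := by
    intro h i hi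
    by_contra hne
    exact hi (by simpa using hne)
  refine ⟨⟨fun hfd => ?_, fun h => ?_⟩, fun h => ?_⟩
  · by_contra hinf
    obtain ⟨S, hSs, hSc⟩ := Set.Infinite.exists_subset_card_eq hinf
      (Module.finrank ℂ (coh Qh Ph V) + 1)
    have h1 := LinearMap.finrank_le_finrank_of_surjective (cohRes_surj Qh Ph V hV S)
    rw [finrank_Tgt] at h1
    have h2 : ∑ i : S, 1 ≤ ∑ i : S, Module.finrank ℂ (locCoh Qh Ph i) :=
      Finset.sum_le_sum fun i _ => hpos i (hSs i.2)
    simp only [Finset.sum_const, Finset.card_univ, Fintype.card_coe, smul_eq_mul, mul_one] at h2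
    omega
  · exact FiniteDimensional.of_injective _ (cohRes_inj Qh Ph V hV' h.toFinset (hS h))
  · have e := LinearEquiv.ofBijective _ ⟨cohRes_inj Qh Ph V hV' h.toFinset (hS h),
      cohRes_surj Qh Ph V hV h.toFinset⟩
    rw [e.finrank_eq, finrank_Tgt,
      Finset.sum_coe_sort h.toFinset (fun i => Module.finrank ℂ (locCoh Qh Ph i))]
    symm
    apply finsum_eq_sum_of_support_subset
    intro i hi
    by_contra hn
    exact hi (hzero i (hS h i (by simpa using hn)))

end Helpers

theorem statement_2 {ι : Type*} [Countable ι] (E : ι → Type*)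
    [∀ i, NormedAddCommGroup (E i)] [∀ i, InnerProductSpace ℂ (E i)]
    [∀ i, FiniteDimensional ℂ (E i)] (r m n : ℕ)
    (Qh : ∀ i, (Fin r → E i) →ₗ[ℂ] (Fin m → E i))
    (Ph : ∀ i, (Fin m → E i) →ₗ[ℂ] (Fin n → E i))
    (hPQ : ∀ i, (Ph i).comp (Qh i) = 0) :
    ((FiniteDimensional ℂ (coh Qh Ph (finSupp E)) ↔
        FiniteDimensional ℂ (coh Qh Ph (⊤ : Submodule ℂ (∀ i, E i)))) ∧
      (FiniteDimensional ℂ (coh Qh Ph (finSupp E)) ↔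
        {i | LinearMap.ker (Ph i) ≠ LinearMap.range (Qh i)}.Finite)) ∧
    (FiniteDimensional ℂ (coh Qh Ph (finSupp E)) →
      Module.finrank ℂ (coh Qh Ph (⊤ : Submodule ℂ (∀ i, E i))) =
          Module.finrank ℂ (coh Qh Ph (finSupp E)) ∧
        Module.finrank ℂ (coh Qh Ph (finSupp E)) =
          ∑ᶠ i, Module.finrank ℂ (locCoh Qh Ph i)) := by
  have hT := coh_main Qh Ph hPQ ⊤ le_top (fun _ _ _ _ _ => Submodule.mem_top)
  have hF := coh_main Qh Ph hPQ (finSupp E) le_rfl (by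
    intro a ha u hu j
    have hfin : (⋃ k : Fin m, {i | a i k ≠ 0}).Finite := Set.finite_iUnion fun k => ha k
    refine hfin.subset fun i hi => ?_
    by_contra hn
    simp only [Set.mem_iUnion, Set.mem_setOf_eq, not_exists, not_not] at hn
    exact hi (by simp [hu i (funext hn)]))
  refine ⟨⟨hF.1.trans hT.1.symm, hF.1⟩, fun h => ?_⟩
  have hb := hF.1.mp h
  exact ⟨(hT.2 hb).trans (hF.2 hb).symm, hF.2 hb⟩
end
end

section
/- Let V ⊆ Π be a linear subspace with Σ ⊆ V, Q(V^r) ⊆ V^m and P(V^m) ⊆ V^n, and write ker Q = { v ∈ Π^r : Q̂ i(v(i)) = 0 for all i ∈ ι }. Assume Q satisfies the regularity condition: for every u ∈ Π^r with Q u ∈ V^m there exists v ∈ ker Q such that u − v ∈ V^r. Then the linear map H(V) → H(Π) induced by the inclusion V^m ↪ Π^m is injective. -/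
noncomputable section

open Submodule

variable {ι : Type*}

theorem statement_5 {ι : Type*} [Countable ι] (E : ι → Type*)
    [∀ i, NormedAddCommGroup (E i)] [∀ i, InnerProductSpace ℂ (E i)]
    [∀ i, FiniteDimensional ℂ (E i)] (r m n : ℕ)
    (Qh : ∀ i, (Fin r → E i) →ₗ[ℂ] (Fin m → E i))
    (Ph : ∀ i, (Fin m → E i) →ₗ[ℂ] (Fin n → E i))
    (hPQ : ∀ i, (Ph i).comp (Qh i) = 0)
    (V : Submodule ℂ (∀ i, E i)) (hSigmaV : finSupp E ≤ V)
    (hQ : (Vpow V r).map (pwMap Qh) ≤ Vpow V m)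
    (hP : (Vpow V m).map (pwMap Ph) ≤ Vpow V n)
    (hreg : ∀ u : ∀ i, Fin r → E i, pwMap Qh u ∈ Vpow V m →
      ∃ v : ∀ i, Fin r → E i, (∀ i, Qh i (v i) = 0) ∧ u - v ∈ Vpow V r) :
    Function.Injective (cohMap Qh Ph (le_top : V ≤ ⊤)) := by
  rw [injective_iff_map_eq_zero]
  intro x
  obtain ⟨a, rfl⟩ := Submodule.Quotient.mk_surjective _ x
  intro h
  have h' := (Submodule.Quotient.mk_eq_zero _).mp h
  obtain ⟨u, -, hu⟩ := h'
  have hu' : pwMap Qh u = (a : ∀ i, Fin m → E i) := hu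
  obtain ⟨v, hv, huv⟩ := hreg u (hu' ▸ a.2.1)
  refine (Submodule.Quotient.mk_eq_zero _).mpr ⟨u - v, huv, ?_⟩
  have hv0 : pwMap Qh v = 0 := funext hv
  rw [map_sub, hv0, sub_zero]
  exact hu'
end
end

section
/- Let V ⊆ Π be a linear subspace with Σ ⊆ V, Q(V^r) ⊆ V^m and P(V^m) ⊆ V^n, and write ker Q = { v ∈ Π^r : Q̂ i(v(i)) = 0 for all i ∈ ι }. Suppose that H(V) is finite dimensional and that Q satisfies the regularity condition: for every u ∈ Π^r with Q u ∈ V^m there exists v ∈ ker Q such that u − v ∈ V^r. Then the linear maps H(Σ) → H(V) → H(Π) induced by the inclusions Σ^m ↪ V^m ↪ Π^m are isomorphisms, and dim H(V) = ∑_{i∈ι} dim(ker P̂ i / ran Q̂ i). -/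
noncomputable section

open Submodule

variable {ι : Type*}

section Helpers

variable {E : ι → Type*} [∀ i, AddCommGroup (E i)] [∀ i, Module ℂ (E i)] {r m n : ℕ}

/-- Evaluation of cocycles at the `i`-th component. -/
def evKer (Ph : ∀ i, (Fin m → E i) →ₗ[ℂ] (Fin n → E i))
    (V : Submodule ℂ (∀ i, E i)) (i : ι) : ↥(cohKer Ph V) →ₗ[ℂ] ↥(LinearMap.ker (Ph i)) where
  toFun a := ⟨(a : ∀ j, Fin m → E j) i, kerMem Ph a i⟩
  map_add' a b := rfl
  map_smul' c a := rfl

/-- The map `H(V) → ∏ H_i`. -/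
def locMap (Qh : ∀ i, (Fin r → E i) →ₗ[ℂ] (Fin m → E i))
    (Ph : ∀ i, (Fin m → E i) →ₗ[ℂ] (Fin n → E i))
    (V : Submodule ℂ (∀ i, E i)) : coh Qh Ph V →ₗ[ℂ] (∀ i, locCoh Qh Ph i) :=
  LinearMap.pi fun i => Submodule.mapQ _ _ (evKer Ph V i) (by
    rintro x ⟨u, -, hu⟩
    exact ⟨u i, congrFun hu i⟩)

theorem locMap_mk (Qh : ∀ i, (Fin r → E i) →ₗ[ℂ] (Fin m → E i))
    (Ph : ∀ i, (Fin m → E i) →ₗ[ℂ] (Fin n → E i))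
    (V : Submodule ℂ (∀ i, E i)) (a : ↥(cohKer Ph V)) (i : ι) :
    locMap Qh Ph V (Submodule.Quotient.mk a) i = Submodule.Quotient.mk (evKer Ph V i a) := rfl

theorem locMap_cohMap (Qh : ∀ i, (Fin r → E i) →ₗ[ℂ] (Fin m → E i))
    (Ph : ∀ i, (Fin m → E i) →ₗ[ℂ] (Fin n → E i))
    {V W : Submodule ℂ (∀ i, E i)} (h : V ≤ W) (x : coh Qh Ph V) :
    locMap Qh Ph W (cohMap Qh Ph h x) = locMap Qh Ph V x := by
  obtain ⟨a, rfl⟩ := Submodule.Quotient.mk_surjective _ x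
  rfl

theorem locMap_injective (Qh : ∀ i, (Fin r → E i) →ₗ[ℂ] (Fin m → E i))
    (Ph : ∀ i, (Fin m → E i) →ₗ[ℂ] (Fin n → E i))
    (V : Submodule ℂ (∀ i, E i))
    (h : ∀ a ∈ Vpow V m, (∀ i, ∃ u, Qh i u = a i) → a ∈ cohRan Qh V) :
    Function.Injective (locMap Qh Ph V) := by
  rw [injective_iff_map_eq_zero]
  intro x hx
  obtain ⟨a, rfl⟩ := Submodule.Quotient.mk_surjective _ x
  rw [Submodule.Quotient.mk_eq_zero]
  refine h _ a.2.1 fun i => ?_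
  have := congrFun hx i
  rw [locMap_mk, Pi.zero_apply, Submodule.Quotient.mk_eq_zero] at this
  exact this

theorem mem_Vpow_finSupp {k : ℕ} (a : ∀ i, Fin k → E i) :
    a ∈ Vpow (finSupp E) k ↔ {i | a i ≠ 0}.Finite := by
  constructor
  · intro h
    have : {i | a i ≠ 0} ⊆ ⋃ j : Fin k, {i | a i j ≠ 0} := by
      intro i hi
      obtain ⟨j, hj⟩ := Function.ne_iff.mp hi
      exact Set.mem_iUnion.mpr ⟨j, hj⟩
    exact (Set.finite_iUnion fun j => h j).subset this
  · intro h j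
    refine Set.Finite.subset h fun i hi h0 => hi ?_
    show a i j = 0
    rw [h0]; rfl

theorem exists_lift (Qh : ∀ i, (Fin r → E i) →ₗ[ℂ] (Fin m → E i))
    (Ph : ∀ i, (Fin m → E i) →ₗ[ℂ] (Fin n → E i))
    (y : ∀ i, locCoh Qh Ph i) (hy : {i | y i ≠ 0}.Finite) :
    ∃ x, locMap Qh Ph (finSupp E) x = y := by
  classical
  have : ∀ i, ∃ a : ↥(LinearMap.ker (Ph i)), Submodule.Quotient.mk a = y i ∧ (y i = 0 → a = 0) := by
    intro i
    by_cases h : y i = 0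
    · exact ⟨0, by rw [h]; rfl, fun _ => rfl⟩
    · obtain ⟨a, ha⟩ := Submodule.Quotient.mk_surjective _ (y i)
      exact ⟨a, ha, fun h' => absurd h' h⟩
  choose a ha ha0 using this
  refine ⟨Submodule.Quotient.mk ⟨fun i => (a i : Fin m → E i), ?_, ?_⟩, ?_⟩
  · refine (mem_Vpow_finSupp _).2 (hy.subset fun i hi h0 => hi ?_)
    show (a i : Fin m → E i) = 0
    rw [ha0 i h0]; rfl
  · exact LinearMap.mem_ker.mpr (funext fun i => (a i).2)
  · funext i
    exact ha i

end Helpers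

theorem statement_6 {ι : Type*} [Countable ι] (E : ι → Type*)
    [∀ i, NormedAddCommGroup (E i)] [∀ i, InnerProductSpace ℂ (E i)]
    [∀ i, FiniteDimensional ℂ (E i)] (r m n : ℕ)
    (Qh : ∀ i, (Fin r → E i) →ₗ[ℂ] (Fin m → E i))
    (Ph : ∀ i, (Fin m → E i) →ₗ[ℂ] (Fin n → E i))
    (hPQ : ∀ i, (Ph i).comp (Qh i) = 0)
    (V : Submodule ℂ (∀ i, E i)) (hSigmaV : finSupp E ≤ V)
    (hQ : (Vpow V r).map (pwMap Qh) ≤ Vpow V m)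
    (hP : (Vpow V m).map (pwMap Ph) ≤ Vpow V n)
    (hfin : FiniteDimensional ℂ (coh Qh Ph V))
    (hreg : ∀ u : ∀ i, Fin r → E i, pwMap Qh u ∈ Vpow V m →
      ∃ v : ∀ i, Fin r → E i, (∀ i, Qh i (v i) = 0) ∧ u - v ∈ Vpow V r) :
    Function.Bijective (cohMap Qh Ph hSigmaV) ∧
      Function.Bijective (cohMap Qh Ph (le_top : V ≤ ⊤)) ∧
      Module.finrank ℂ (coh Qh Ph V) = ∑ᶠ i, Module.finrank ℂ (locCoh Qh Ph i) := by
  classical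
  have injS : Function.Injective (locMap Qh Ph (finSupp E)) := by
    refine locMap_injective _ _ _ fun a ha hu => ?_
    choose u hu using hu
    refine ⟨fun i => if a i = 0 then 0 else u i, ?_, ?_⟩
    · refine (mem_Vpow_finSupp _).2 (((mem_Vpow_finSupp _).1 ha).subset fun i hi h0 => hi ?_)
      simp [h0]
    · funext i
      by_cases h : a i = 0
      · simp [h]
      · simp [h, hu]
  have injV : Function.Injective (locMap Qh Ph V) := by
    refine locMap_injective _ _ _ fun a ha hu => ?_
    choose u hu using hu
    have hu' : pwMap Qh u = a := funext hu
    obtain ⟨v, hv, huv⟩ := hreg u (hu' ▸ ha)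
    refine ⟨u - v, huv, ?_⟩
    funext i
    simp [hv, hu]
  have injT : Function.Injective (locMap Qh Ph (⊤ : Submodule ℂ (∀ i, E i))) := by
    refine locMap_injective _ _ _ fun a ha hu => ?_
    choose u hu using hu
    exact ⟨u, fun j => Submodule.mem_top, funext hu⟩
  -- only finitely many local cohomology spaces are nonzero
  have finS : {i | ∃ y : locCoh Qh Ph i, y ≠ 0}.Finite := by
    have hch : ∀ i : {i | ∃ y : locCoh Qh Ph i, y ≠ 0}, ∃ y : locCoh Qh Ph i, y ≠ 0 :=
      fun i => i.2
    choose y hy using hch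
    have hx : ∀ i : {i | ∃ y : locCoh Qh Ph i, y ≠ 0}, ∃ x : coh Qh Ph V,
        locMap Qh Ph V x = Pi.single (M := fun i => locCoh Qh Ph i) (i : ι) (y i) := by
      intro i
      obtain ⟨x, hx⟩ := exists_lift Qh Ph
        (Pi.single (M := fun i => locCoh Qh Ph i) (i : ι) (y i))
        ((Set.finite_singleton (i : ι)).subset fun j hj => by
          by_contra hne
          exact hj (Pi.single_eq_of_ne hne _))
      exact ⟨cohMap Qh Ph hSigmaV x, by rw [locMap_cohMap, hx]⟩
    choose x hx using hx
    have li : LinearIndependent ℂ x := by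
      rw [linearIndependent_iff']
      intro s g hg j hj
      have h1 := congrFun (congrArg (locMap Qh Ph V) hg) (j : ι)
      rw [map_sum, Finset.sum_apply, Finset.sum_eq_single j] at h1
      · rw [map_smul, hx, Pi.smul_apply, Pi.single_eq_same, map_zero, Pi.zero_apply] at h1
        exact (smul_eq_zero.mp h1).resolve_right (hy j)
      · intro b _ hb
        rw [map_smul, hx, Pi.smul_apply, Pi.single_eq_of_ne, smul_zero]
        exact fun h => hb (Subtype.ext h.symm)
      · exact fun h => absurd hj h
    have := li.finite
    exact Set.toFinite _
  have surS : Function.Surjective (locMap Qh Ph (finSupp E)) := fun y =>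
    exists_lift Qh Ph y (finS.subset fun i hi => ⟨y i, hi⟩)
  have surV : Function.Surjective (locMap Qh Ph V) := fun y => by
    obtain ⟨x, hx⟩ := surS y
    exact ⟨cohMap Qh Ph hSigmaV x, by rw [locMap_cohMap, hx]⟩
  refine ⟨⟨fun x y h => injS ?_, fun y => ?_⟩, ⟨fun x y h => injV ?_, fun y => ?_⟩, ?_⟩
  · rw [← locMap_cohMap Qh Ph hSigmaV, h, locMap_cohMap]
  · obtain ⟨x, hx⟩ := surS (locMap Qh Ph V y)
    exact ⟨x, injV (by rw [locMap_cohMap, hx])⟩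
  · rw [← locMap_cohMap Qh Ph (le_top : V ≤ ⊤), h, locMap_cohMap]
  · obtain ⟨x, hx⟩ := surV (locMap Qh Ph ⊤ y)
    exact ⟨x, injT (by rw [locMap_cohMap, hx])⟩
  · let R : (∀ i, locCoh Qh Ph i) →ₗ[ℂ] (∀ i : finS.toFinset, locCoh Qh Ph i) :=
      LinearMap.pi fun i => LinearMap.proj (i : ι)
    have hR : Function.Bijective R := by
      constructor
      · rw [injective_iff_map_eq_zero]
        intro y hy
        funext i
        by_contra hne
        exact hne (congrFun hy ⟨i, finS.mem_toFinset.2 ⟨y i, hne⟩⟩)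
      · intro z
        refine ⟨fun i => if h : i ∈ finS.toFinset then z ⟨i, h⟩ else 0, ?_⟩
        funext i
        exact dif_pos i.2
    have e := (LinearEquiv.ofBijective (locMap Qh Ph V) ⟨injV, surV⟩).trans
      (LinearEquiv.ofBijective R hR)
    have hfree : ∀ i : finS.toFinset, Module.Free ℂ (locCoh Qh Ph (i : ι)) := fun i =>
      Module.Free.of_divisionRing ℂ _
    have hfinite : ∀ i : finS.toFinset, Module.Finite ℂ (locCoh Qh Ph (i : ι)) := fun i =>
      inferInstance
    rw [e.finrank_eq, Module.finrank_pi_fintype,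
      finsum_eq_sum_of_support_subset (s := finS.toFinset)]
    · exact Finset.sum_coe_sort finS.toFinset (fun i => Module.finrank ℂ (locCoh Qh Ph i))
    · intro i hi
      rw [Finset.mem_coe, finS.mem_toFinset]
      by_contra hne
      have : Subsingleton (locCoh Qh Ph i) :=
        subsingleton_of_forall_eq 0 fun y => by
          by_contra h
          exact hne ⟨y, h⟩
      exact hi Module.finrank_zero_of_subsingleton
end
end

section
/- Assume condition S(ρ) holds for some ρ > 0, let V = D_{(ω)} (so Σ ⊆ V ⊆ Π), and assume Q(V^r) ⊆ V^m and P(V^m) ⊆ V^n. Then H(V) is finite dimensional if and only if both H(Σ) is finite dimensional and Q is almost V globally hypoelliptic, i.e., for every u ∈ Π^r with Q u ∈ V^m there exists v ∈ ker Q := { v ∈ Π^r : Q̂ i(v(i)) = 0 for all i } with u − v ∈ V^r. In that case dim H(V) = ∑_{i∈ι} dim(ker P̂ i / ran Q̂ i). -/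
noncomputable section

open Submodule

variable {ι : Type*}

/-- `D_{(ω)} = ⋂_{t>0} D_{ω,t}` as a linear subspace of `Π = ∏ i, E i`. -/
def DprojSub (E : ι → Type*) [∀ i, NormedAddCommGroup (E i)]
    [∀ i, InnerProductSpace ℂ (E i)] (ω : ι → ℝ) : Submodule ℂ (∀ i, E i) where
  carrier := {a | ∀ t > (0 : ℝ), Summable fun i => Real.exp (2 * t * ω i) * ‖a i‖ ^ 2}
  zero_mem' := by
    intro t ht
    simpa using summable_zero
  add_mem' := by
    intro a b ha hb t ht
    refine Summable.of_nonneg_of_le (fun i => by positivity) (fun i => ?_)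
      (((ha t ht).mul_left 2).add ((hb t ht).mul_left 2))
    have h2 : ‖a i + b i‖ ^ 2 ≤ (‖a i‖ + ‖b i‖) ^ 2 :=
      pow_le_pow_left₀ (norm_nonneg _) (norm_add_le _ _) 2
    have h3 : (‖a i‖ + ‖b i‖) ^ 2 ≤ 2 * ‖a i‖ ^ 2 + 2 * ‖b i‖ ^ 2 := by
      nlinarith [sq_nonneg (‖a i‖ - ‖b i‖)]
    calc Real.exp (2 * t * ω i) * ‖(a + b) i‖ ^ 2
        ≤ Real.exp (2 * t * ω i) * (2 * ‖a i‖ ^ 2 + 2 * ‖b i‖ ^ 2) := by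
          refine mul_le_mul_of_nonneg_left ?_ (Real.exp_nonneg _)
          simpa using h2.trans h3
      _ = 2 * (Real.exp (2 * t * ω i) * ‖a i‖ ^ 2) +
            2 * (Real.exp (2 * t * ω i) * ‖b i‖ ^ 2) := by ring
  smul_mem' := by
    intro c a ha t ht
    refine ((ha t ht).mul_left (‖c‖ ^ 2)).congr fun i => ?_
    simp only [Pi.smul_apply, norm_smul, mul_pow]
    ring

theorem exists_label {ι : Type*} (F : ι → ℝ) (hF : ∀ C : ℝ, ∃ i, C < F i) :
    ∃ lab : ι → ℕ, ∀ (j : ℕ) (C : ℝ), ∃ i, lab i = j ∧ C < F i := by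
  classical
  set h : ι → ℕ := fun i => ⌊F i⌋₊ with hh
  have hinf : (setOf (fun k => k ∈ Set.range h)).Infinite := by
    refine Set.infinite_of_not_bddAbove ?_
    rintro ⟨B, hB⟩
    obtain ⟨i, hi⟩ := hF ((B : ℝ) + 1)
    have h1 : h i ≤ B := hB ⟨i, rfl⟩
    have h2 : F i < (h i : ℝ) + 1 := Nat.lt_floor_add_one _
    have h3 : (h i : ℝ) ≤ B := by exact_mod_cast h1
    linarith
  refine ⟨fun i => (Nat.unpair (Nat.count (fun k => k ∈ Set.range h) (h i))).1, ?_⟩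
  intro j C
  obtain ⟨l, hl⟩ := exists_nat_gt (max C 0)
  obtain ⟨i, hi⟩ := Nat.nth_mem_of_infinite hinf (Nat.pair j l)
  have hi' : h i = Nat.nth (fun k => k ∈ Set.range h) (Nat.pair j l) := hi
  have hc : Nat.count (fun k => k ∈ Set.range h) (h i) = Nat.pair j l := by
    rw [hi', Nat.count_nth_of_infinite hinf]
  refine ⟨i, by show (Nat.unpair (Nat.count (fun k => k ∈ Set.range h) (h i))).1 = j; rw [hc, Nat.unpair_pair], ?_⟩
  have h1 : Nat.pair j l ≤ h i := by rw [← hc]; exact Nat.count_le _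
  have h2 : l ≤ h i := (Nat.right_le_pair j l).trans h1
  have h3 : (l : ℝ) ≤ h i := by exact_mod_cast h2
  have hlpos : (0 : ℝ) < l := (le_max_right _ _).trans_lt hl
  have h4 : (h i : ℝ) ≤ F i := by
    apply Nat.floor_le
    by_contra hneg
    have : h i = 0 := Nat.floor_of_nonpos (not_le.mp hneg).le
    rw [this] at h3
    simp at h3
    simp [h3] at hlpos
  linarith [le_max_left C 0]

theorem mem_Vpow_of_bound {ι : Type*} {E : ι → Type*}
    [∀ i, NormedAddCommGroup (E i)] [∀ i, InnerProductSpace ℂ (E i)]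
    (ω : ι → ℝ) (hω : ∀ i, 0 ≤ ω i)
    (ρ : ℝ) (hρ : 0 < ρ) (hS : Summable fun i => Real.exp (-ρ * ω i)) (k : ℕ)
    (x : ∀ i, Fin k → E i)
    (h : ∀ t > (0 : ℝ), ∃ C : ℝ, ∀ i, Real.exp (t * ω i) * ‖x i‖ ≤ C) :
    x ∈ Vpow (DprojSub E ω) k := by
  intro j t ht
  obtain ⟨C, hC⟩ := h (t + ρ) (by positivity)
  refine Summable.of_nonneg_of_le (fun i => by positivity) (fun i => ?_) (hS.mul_left (C ^ 2))
  have h1 : ‖x i j‖ ≤ ‖x i‖ := norm_le_pi_norm _ _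
  have h2 : (Real.exp ((t + ρ) * ω i) * ‖x i‖) ^ 2 ≤ C ^ 2 :=
    pow_le_pow_left₀ (by positivity) (hC i) 2
  have h3 : (Real.exp ((t + ρ) * ω i)) ^ 2 * Real.exp (-ρ * ω i) =
      Real.exp (2 * t * ω i) * Real.exp (ρ * ω i) := by
    rw [← Real.exp_nat_mul, ← Real.exp_add, ← Real.exp_add]
    congr 1; push_cast; ring
  have h4 : 1 ≤ Real.exp (ρ * ω i) := Real.one_le_exp (mul_nonneg hρ.le (hω i))
  calc Real.exp (2 * t * ω i) * ‖x i j‖ ^ 2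
      ≤ Real.exp (2 * t * ω i) * ‖x i‖ ^ 2 := by gcongr
    _ ≤ (Real.exp (2 * t * ω i) * Real.exp (ρ * ω i)) * ‖x i‖ ^ 2 := by
        gcongr
        exact le_mul_of_one_le_right (by positivity) h4
    _ = (Real.exp ((t + ρ) * ω i) * ‖x i‖) ^ 2 * Real.exp (-ρ * ω i) := by
        rw [← h3]; ring
    _ ≤ C ^ 2 * Real.exp (-ρ * ω i) := by gcongr

theorem bound_of_mem_Vpow {ι : Type*} {E : ι → Type*}
    [∀ i, NormedAddCommGroup (E i)] [∀ i, InnerProductSpace ℂ (E i)]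
    (ω : ι → ℝ) (k : ℕ) (x : ∀ i, Fin k → E i) (hx : x ∈ Vpow (DprojSub E ω) k)
    (t : ℝ) (ht : 0 < t) : ∃ C : ℝ, ∀ i, Real.exp (t * ω i) * ‖x i‖ ≤ C := by
  have hsum := summable_sum (s := Finset.univ) (fun j _ => hx j t ht)
  have hnn : ∀ (i : ι) (j : Fin k), 0 ≤ Real.exp (2 * t * ω i) * ‖x i j‖ ^ 2 :=
    fun i j => by positivity
  refine ⟨∑' i, ∑ j : Fin k, Real.exp (2 * t * ω i) * ‖x i j‖ ^ 2 + 1, fun i => ?_⟩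
  set S := ∑' i, ∑ j : Fin k, Real.exp (2 * t * ω i) * ‖x i j‖ ^ 2 with hSdef
  have hS0 : 0 ≤ S := tsum_nonneg fun i => Finset.sum_nonneg fun j _ => hnn i j
  have hle : ∑ j : Fin k, Real.exp (2 * t * ω i) * ‖x i j‖ ^ 2 ≤ S :=
    hsum.le_tsum i (fun i' _ => Finset.sum_nonneg fun j _ => hnn i' j)
  have key : ‖x i‖ ≤ Real.exp (-(t * ω i)) * (S + 1) := by
    rw [pi_norm_le_iff_of_nonneg (by positivity)]
    intro j
    have h1 : Real.exp (2 * t * ω i) * ‖x i j‖ ^ 2 ≤ S :=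
      (Finset.single_le_sum (fun j _ => hnn i j) (Finset.mem_univ j)).trans hle
    have h2 : (Real.exp (t * ω i) * ‖x i j‖) ^ 2 ≤ (S + 1) ^ 2 := by
      have : (Real.exp (t * ω i) * ‖x i j‖) ^ 2 = Real.exp (2 * t * ω i) * ‖x i j‖ ^ 2 := by
        rw [mul_pow, ← Real.exp_nat_mul]
        congr 2; push_cast; ring
      rw [this]; nlinarith
    have h3 := le_of_sq_le_sq h2 (by positivity)
    rw [Real.exp_neg, ← div_eq_inv_mul, le_div_iff₀ (Real.exp_pos _)]
    linarith
  calc Real.exp (t * ω i) * ‖x i‖ ≤ Real.exp (t * ω i) * (Real.exp (-(t * ω i)) * (S + 1)) := by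
        gcongr
    _ = S + 1 := by rw [← mul_assoc, ← Real.exp_add]; simp

theorem exists_min {F G : Type*} [NormedAddCommGroup F] [NormedSpace ℂ F]
    [FiniteDimensional ℂ F] [AddCommGroup G] [Module ℂ G] (T : F →ₗ[ℂ] G) (u : F) :
    ∃ v, T v = 0 ∧ ∀ v', T v' = 0 → ‖u - v‖ ≤ ‖u - v'‖ := by
  haveI : ProperSpace F := FiniteDimensional.proper ℂ F
  have hc : IsClosed ((LinearMap.ker T : Submodule ℂ F) : Set F) :=
    Submodule.closed_of_finiteDimensional _
  obtain ⟨v, hv, hd⟩ := hc.exists_infDist_eq_dist ⟨0, by simp⟩ u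
  refine ⟨v, hv, fun v' hv' => ?_⟩
  rw [← dist_eq_norm, ← dist_eq_norm, ← hd]
  exact Metric.infDist_le_dist_of_mem (by exact hv')

theorem finite_support_of_finSupp {ι : Type*} (L : ι → Type*) [∀ i, AddCommGroup (L i)]
    [∀ i, Module ℂ (L i)] (h : FiniteDimensional ℂ (finSupp L)) :
    {i | Nontrivial (L i)}.Finite := by
  classical
  have hex : ∀ i : {i | Nontrivial (L i)}, ∃ x : L i, x ≠ 0 := fun i => by
    haveI : Nontrivial (L i) := i.2
    exact exists_ne 0
  choose x hx using hex
  let y : {i | Nontrivial (L i)} → finSupp L := fun i =>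
    ⟨Pi.single (i : ι) (x i), by
      refine (Set.finite_singleton (i : ι)).subset fun k hk => ?_
      by_contra hne
      exact hk (Pi.single_eq_of_ne hne _)⟩
  have hy : LinearIndependent ℂ y := by
    rw [linearIndependent_iff']
    intro s g hg i hi
    have h1 := congrFun (congrArg Subtype.val hg) (i : ι)
    simp only [Submodule.coe_sum, Submodule.coe_smul, Finset.sum_apply, Pi.smul_apply,
      Submodule.coe_zero, Pi.zero_apply, y] at h1
    rw [Finset.sum_eq_single i] at h1
    · rw [Pi.single_eq_same] at h1
      exact (smul_eq_zero.mp h1).resolve_right (hx i)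
    · intro b _ hb
      rw [Pi.single_eq_of_ne (fun hc => hb (Subtype.ext hc.symm)), smul_zero]
    · intro hn; exact absurd hi hn
  haveI := hy.finite
  exact Set.toFinite _

theorem pi_finrank {ι : Type*} (L : ι → Type*) [∀ i, AddCommGroup (L i)]
    [∀ i, Module ℂ (L i)] [∀ i, FiniteDimensional ℂ (L i)]
    (h : {i | Nontrivial (L i)}.Finite) :
    FiniteDimensional ℂ (∀ i, L i) ∧
      Module.finrank ℂ (∀ i, L i) = ∑ᶠ i, Module.finrank ℂ (L i) := by
  classical
  have hsub : ∀ i, i ∉ {i | Nontrivial (L i)} → Subsingleton (L i) := fun i hi =>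
    not_nontrivial_iff_subsingleton.mp hi
  let f : (∀ i, L i) →ₗ[ℂ] (∀ i : h.toFinset, L i) :=
    LinearMap.pi fun i => LinearMap.proj (i : ι)
  have hf : Function.Bijective f := by
    constructor
    · intro a b hab
      funext i
      by_cases hi : i ∈ {i | Nontrivial (L i)}
      · exact congrFun hab ⟨i, h.mem_toFinset.mpr hi⟩
      · haveI := hsub i hi
        exact Subsingleton.elim _ _
    · intro b
      refine ⟨fun i => if hi : i ∈ h.toFinset then b ⟨i, hi⟩ else 0, ?_⟩
      funext i
      simp only [f, LinearMap.pi_apply, LinearMap.proj_apply]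
      rw [dif_pos i.2]
  let e := LinearEquiv.ofBijective f hf
  refine ⟨Module.Finite.equiv e.symm, ?_⟩
  rw [e.finrank_eq, Module.finrank_pi_fintype, finsum_eq_sum_of_support_subset (s := h.toFinset)]
  · exact Finset.sum_coe_sort h.toFinset (fun i => Module.finrank ℂ (L i))
  · intro i hi
    rw [Function.mem_support] at hi
    rw [Set.Finite.coe_toFinset]
    by_contra hn
    haveI := hsub i hn
    exact hi Module.finrank_zero_of_subsingleton

theorem finite_of_inj {A B : Type*} [AddCommGroup A] [Module ℂ A] [AddCommGroup B] [Module ℂ B]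
    (h : FiniteDimensional ℂ B) (f : A →ₗ[ℂ] B) (hf : Function.Injective f) :
    FiniteDimensional ℂ A :=
  Module.Finite.of_injective f hf

section Phi

variable {E : ι → Type*} [∀ i, AddCommGroup (E i)] [∀ i, Module ℂ (E i)] {r m n : ℕ}

/-- The localisation map `H(V) → ∏ i, ker P̂ i / ran Q̂ i`. -/
def cohLoc (Qh : ∀ i, (Fin r → E i) →ₗ[ℂ] (Fin m → E i))
    (Ph : ∀ i, (Fin m → E i) →ₗ[ℂ] (Fin n → E i)) (V : Submodule ℂ (∀ i, E i)) :
    coh Qh Ph V →ₗ[ℂ] (∀ i, locCoh Qh Ph i) :=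
  Submodule.liftQ ((cohRan Qh V).comap (cohKer Ph V).subtype)
    (LinearMap.pi fun i => (Submodule.mkQ ((LinearMap.range (Qh i)).comap
        (LinearMap.ker (Ph i)).subtype)).comp
      (LinearMap.codRestrict (LinearMap.ker (Ph i))
        ((LinearMap.proj i).comp (cohKer Ph V).subtype) (fun a => kerMem Ph a i)))
    (by
      intro x hx0
      obtain ⟨w, hw, hx⟩ := Submodule.mem_comap.mp hx0
      rw [LinearMap.mem_ker]
      funext i
      refine (Submodule.Quotient.mk_eq_zero _).mpr ?_
      exact ⟨w i, congrFun hx i⟩)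

theorem cohLoc_mk_apply (Qh : ∀ i, (Fin r → E i) →ₗ[ℂ] (Fin m → E i))
    (Ph : ∀ i, (Fin m → E i) →ₗ[ℂ] (Fin n → E i)) (V : Submodule ℂ (∀ i, E i))
    (a : cohKer Ph V) (i : ι) :
    cohLoc Qh Ph V (Submodule.Quotient.mk a) i =
      Submodule.Quotient.mk ⟨a.1 i, kerMem Ph a i⟩ := rfl

theorem cohLoc_injective (Qh : ∀ i, (Fin r → E i) →ₗ[ℂ] (Fin m → E i))
    (Ph : ∀ i, (Fin m → E i) →ₗ[ℂ] (Fin n → E i)) (V : Submodule ℂ (∀ i, E i))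
    (h : ∀ u : ∀ i, Fin r → E i, pwMap Qh u ∈ Vpow V m →
      ∃ v : ∀ i, Fin r → E i, (∀ i, Qh i (v i) = 0) ∧ u - v ∈ Vpow V r) :
    Function.Injective (cohLoc Qh Ph V) := by
  rw [injective_iff_map_eq_zero]
  intro x hx
  obtain ⟨a, rfl⟩ := Submodule.Quotient.mk_surjective _ x
  have h1 : ∀ i, ∃ w, Qh i w = a.1 i := fun i => by
    have := congrFun hx i
    rw [cohLoc_mk_apply] at this
    exact (Submodule.Quotient.mk_eq_zero _).mp this
  choose w hw using h1
  have hw' : pwMap Qh w = a.1 := funext hw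
  obtain ⟨v, hv, hm⟩ := h w (by rw [hw']; exact a.2.1)
  refine (Submodule.Quotient.mk_eq_zero _).mpr ?_
  refine ⟨w - v, hm, ?_⟩
  funext i
  simp [hv, hw]

theorem finSupp_agh (Qh : ∀ i, (Fin r → E i) →ₗ[ℂ] (Fin m → E i))
    (u : ∀ i, Fin r → E i) (hu : pwMap Qh u ∈ Vpow (finSupp E) m) :
      ∃ v : ∀ i, Fin r → E i, (∀ i, Qh i (v i) = 0) ∧ u - v ∈ Vpow (finSupp E) r := by
  classical
  refine ⟨fun i => if Qh i (u i) = 0 then u i else 0, fun i => ?_, fun j => ?_⟩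
  · by_cases hi : Qh i (u i) = 0 <;> simp [hi]
  · have hfin : (⋃ k : Fin m, {i | (pwMap Qh u i) k ≠ 0}).Finite :=
      Set.finite_iUnion fun k => hu k
    refine hfin.subset fun i hi => ?_
    by_contra hn
    simp only [Set.mem_iUnion, Set.mem_setOf_eq, not_exists, not_not, pwMap_apply] at hn
    have h0 : Qh i (u i) = 0 := funext hn
    exact hi (by simp [h0])

theorem cohLoc_hits (Qh : ∀ i, (Fin r → E i) →ₗ[ℂ] (Fin m → E i))
    (Ph : ∀ i, (Fin m → E i) →ₗ[ℂ] (Fin n → E i)) (V : Submodule ℂ (∀ i, E i))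
    (hV : finSupp E ≤ V) :
    finSupp (locCoh Qh Ph) ≤ LinearMap.range (cohLoc Qh Ph V) := by
  classical
  intro c hc
  have h1 : ∀ i, ∃ a : LinearMap.ker (Ph i), (Submodule.Quotient.mk a : locCoh Qh Ph i) = c i ∧
      (c i = 0 → a = 0) := fun i => by
    by_cases hi : c i = 0
    · exact ⟨0, by rw [hi]; exact Submodule.Quotient.mk_zero _, fun _ => rfl⟩
    · obtain ⟨a, ha⟩ := Submodule.Quotient.mk_surjective _ (c i)
      exact ⟨a, ha, fun h => absurd h hi⟩
  choose a ha ha0 using h1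
  have hm : (fun i => (a i : Fin m → E i)) ∈ cohKer Ph V := by
    refine ⟨fun j => hV ?_, ?_⟩
    · refine Set.Finite.subset hc fun i hi hci => hi ?_
      simp [ha0 i hci]
    · exact LinearMap.mem_ker.mpr (funext fun i => (a i).2)
  exact ⟨Submodule.Quotient.mk ⟨_, hm⟩, funext fun i => ha i⟩

theorem nontrivial_finite (Qh : ∀ i, (Fin r → E i) →ₗ[ℂ] (Fin m → E i))
    (Ph : ∀ i, (Fin m → E i) →ₗ[ℂ] (Fin n → E i)) (V : Submodule ℂ (∀ i, E i))
    (hV : finSupp E ≤ V) (hfd : FiniteDimensional ℂ (coh Qh Ph V)) :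
    {i | Nontrivial (locCoh Qh Ph i)}.Finite := by
  apply finite_support_of_finSupp
  exact Module.Finite.of_injective _ (Submodule.inclusion_injective (cohLoc_hits Qh Ph V hV))

theorem coh_finite (Qh : ∀ i, (Fin r → E i) →ₗ[ℂ] (Fin m → E i))
    (Ph : ∀ i, (Fin m → E i) →ₗ[ℂ] (Fin n → E i)) (V : Submodule ℂ (∀ i, E i))
    (hfin : Module.Finite ℂ (∀ i, locCoh Qh Ph i))
    (hinj : Function.Injective (cohLoc Qh Ph V)) : FiniteDimensional ℂ (coh Qh Ph V) :=
  letI i1 : ∀ i, AddCommGroup (locCoh Qh Ph i) := fun i => inferInstance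
  letI i2 : ∀ i, Module ℂ (locCoh Qh Ph i) := fun i => inferInstance
  @finite_of_inj (coh Qh Ph V) (∀ i, locCoh Qh Ph i) _ _ (@Pi.addCommGroup _ _ i1)
    (@Pi.module _ _ ℂ _ _ i2) hfin (cohLoc Qh Ph V) hinj

theorem finSupp_eq_top_of_finite {L : ι → Type*} [∀ i, AddCommGroup (L i)]
    [∀ i, Module ℂ (L i)] (h : {i | Nontrivial (L i)}.Finite) : finSupp L = ⊤ := by
  rw [eq_top_iff]
  intro c _
  refine h.subset fun i hi => ?_
  exact ⟨⟨c i, 0, hi⟩⟩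

end Phi

theorem finSupp_le_Dproj {ι : Type*} (E : ι → Type*)
    [∀ i, NormedAddCommGroup (E i)] [∀ i, InnerProductSpace ℂ (E i)] (ω : ι → ℝ) :
    finSupp E ≤ DprojSub E ω := by
  intro a ha t _
  refine summable_of_finite_support (Set.Finite.subset ha fun i hi h0 => hi ?_)
  simp [h0]

theorem agh_of_finite {ι : Type*} (E : ι → Type*)
    [∀ i, NormedAddCommGroup (E i)] [∀ i, InnerProductSpace ℂ (E i)]
    [∀ i, FiniteDimensional ℂ (E i)] (r m n : ℕ)
    (Qh : ∀ i, (Fin r → E i) →ₗ[ℂ] (Fin m → E i))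
    (Ph : ∀ i, (Fin m → E i) →ₗ[ℂ] (Fin n → E i))
    (hPQ : ∀ i, (Ph i).comp (Qh i) = 0)
    (ω : ι → ℝ) (hω : ∀ i, 0 ≤ ω i)
    (ρ : ℝ) (hρ : 0 < ρ) (hS : Summable fun i => Real.exp (-ρ * ω i))
    (hfd : FiniteDimensional ℂ (coh Qh Ph (DprojSub E ω)))
    (u : ∀ i, Fin r → E i) (hu : pwMap Qh u ∈ Vpow (DprojSub E ω) m) :
    ∃ v : ∀ i, Fin r → E i, (∀ i, Qh i (v i) = 0) ∧
            u - v ∈ Vpow (DprojSub E ω) r := by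
  classical
  choose v hv hmin using fun i => exists_min (Qh i) (u i)
  refine ⟨v, hv, mem_Vpow_of_bound ω hω ρ hρ hS r _ ?_⟩
  by_contra! hcon
  obtain ⟨t, ht, hunb⟩ := hcon
  obtain ⟨lab, hlab⟩ := exists_label _ hunb
  -- the truncated data
  let z : ℕ → (∀ i, Fin m → E i) := fun j i => if lab i = j then Qh i (u i) else 0
  have hz : ∀ j, z j ∈ cohKer Ph (DprojSub E ω) := by
    intro j
    refine ⟨fun k s hs => ?_, ?_⟩
    · refine Summable.of_nonneg_of_le (fun i => by positivity) (fun i => ?_) (hu k s hs)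
      by_cases hi : lab i = j
      · simp [z, hi]
      · simp only [z, hi, if_false, Pi.zero_apply, norm_zero]
        simp only [ne_eq, OfNat.ofNat_ne_zero, not_false_eq_true, zero_pow, mul_zero]
        positivity
    · refine LinearMap.mem_ker.mpr (funext fun i => ?_)
      by_cases hi : lab i = j
      · simpa [z, hi] using LinearMap.congr_fun (hPQ i) (u i)
      · simp [z, hi]
  let y : ℕ → coh Qh Ph (DprojSub E ω) := fun j => Submodule.Quotient.mk ⟨z j, hz j⟩
  have hy : LinearIndependent ℂ y := by
    rw [linearIndependent_iff']
    intro s g hg j hj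
    have h1 : (Submodule.Quotient.mk (∑ j ∈ s, g j • (⟨z j, hz j⟩ : cohKer Ph (DprojSub E ω))) :
        coh Qh Ph (DprojSub E ω)) = 0 := by
      rw [← hg]
      change Submodule.mkQ _ _ = _
      rw [map_sum]
      rfl
    obtain ⟨w, hw, hwe⟩ := (Submodule.Quotient.mk_eq_zero _).mp h1
    by_contra hgj
    obtain ⟨C, hC⟩ := bound_of_mem_Vpow ω r w hw t ht
    obtain ⟨i, hi, hlt⟩ := hlab j (‖(g j)⁻¹‖ * C)
    have h2 : Qh i (w i) = g j • Qh i (u i) := by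
      have := congrFun hwe i
      simp only [pwMap_apply, Submodule.subtype_apply, Submodule.coe_sum, Submodule.coe_smul,
        Finset.sum_apply, Pi.smul_apply] at this
      rw [this, Finset.sum_eq_single j]
      · simp [z, hi]
      · intro b _ hb
        have : ¬ lab i = b := fun h => hb (h.symm.trans hi)
        simp [z, this]
      · intro hn; exact absurd hj hn
    have h3 := hmin i (u i - (g j)⁻¹ • w i) (by
      rw [map_sub, map_smul, h2, smul_smul, inv_mul_cancel₀ hgj, one_smul, sub_self])
    rw [sub_sub_cancel, norm_smul] at h3
    have h4 : Real.exp (t * ω i) * ‖(u - v) i‖ ≤ ‖(g j)⁻¹‖ * C :=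
      calc Real.exp (t * ω i) * ‖(u - v) i‖ ≤ Real.exp (t * ω i) * (‖(g j)⁻¹‖ * ‖w i‖) := by
            gcongr; exact h3
        _ = ‖(g j)⁻¹‖ * (Real.exp (t * ω i) * ‖w i‖) := by ring
        _ ≤ _ := by gcongr; exact hC i
    linarith
  haveI := hy.finite
  exact not_finite ℕ

theorem statement_18 {ι : Type*} [Countable ι] (E : ι → Type*)
    [∀ i, NormedAddCommGroup (E i)] [∀ i, InnerProductSpace ℂ (E i)]
    [∀ i, FiniteDimensional ℂ (E i)] (r m n : ℕ)
    (Qh : ∀ i, (Fin r → E i) →ₗ[ℂ] (Fin m → E i))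
    (Ph : ∀ i, (Fin m → E i) →ₗ[ℂ] (Fin n → E i))
    (hPQ : ∀ i, (Ph i).comp (Qh i) = 0)
    (ω : ι → ℝ) (hω : ∀ i, 0 ≤ ω i)
    (ρ : ℝ) (hρ : 0 < ρ) (hS : Summable fun i => Real.exp (-ρ * ω i))
    (hQ : (Vpow (DprojSub E ω) r).map (pwMap Qh) ≤ Vpow (DprojSub E ω) m)
    (hP : (Vpow (DprojSub E ω) m).map (pwMap Ph) ≤ Vpow (DprojSub E ω) n) :
    (FiniteDimensional ℂ (coh Qh Ph (DprojSub E ω)) ↔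
      FiniteDimensional ℂ (coh Qh Ph (finSupp E)) ∧
        ∀ u : ∀ i, Fin r → E i, pwMap Qh u ∈ Vpow (DprojSub E ω) m →
          ∃ v : ∀ i, Fin r → E i, (∀ i, Qh i (v i) = 0) ∧
            u - v ∈ Vpow (DprojSub E ω) r) ∧
    (FiniteDimensional ℂ (coh Qh Ph (DprojSub E ω)) →
      Module.finrank ℂ (coh Qh Ph (DprojSub E ω)) =
        ∑ᶠ i, Module.finrank ℂ (locCoh Qh Ph i)) := by
  have hle := finSupp_le_Dproj E ω
  have hagh := agh_of_finite E r m n Qh Ph hPQ ω hω ρ hρ hS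
  refine ⟨⟨fun hfd => ⟨?_, hagh hfd⟩, ?_⟩, fun hfd => ?_⟩
  · obtain ⟨hfin, -⟩ := pi_finrank (locCoh Qh Ph) (nontrivial_finite Qh Ph _ hle hfd)
    exact coh_finite Qh Ph _ hfin (cohLoc_injective Qh Ph _ (finSupp_agh Qh))
  · rintro ⟨hfd, h⟩
    obtain ⟨hfin, -⟩ := pi_finrank (locCoh Qh Ph) (nontrivial_finite Qh Ph _ le_rfl hfd)
    exact coh_finite Qh Ph _ hfin (cohLoc_injective Qh Ph _ h)
  · have hJ := nontrivial_finite Qh Ph _ hle hfd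
    obtain ⟨hfin, hrank⟩ := pi_finrank (locCoh Qh Ph) hJ
    rw [← hrank]
    refine (LinearEquiv.ofBijective (cohLoc Qh Ph (DprojSub E ω))
      ⟨cohLoc_injective Qh Ph _ (hagh hfd), ?_⟩).finrank_eq
    rw [← LinearMap.range_eq_top, eq_top_iff, ← finSupp_eq_top_of_finite hJ]
    exact cohLoc_hits Qh Ph _ hle
end
end

section
/- Fix i₀ ∈ ι and assume H(Σ) is finite dimensional. The linear map from ker P̂ i₀ / ran Q̂ i₀ to H(Σ) induced by the canonical embedding of (E i₀)^m into Σ^m (families supported at i₀) is injective, and it is surjective if and only if ker P̂ i = ran Q̂ i for every i ∈ ι with i ≠ i₀. -/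
noncomputable section

open Submodule

variable {ι : Type*}

section Emb

variable {ι : Type*} [DecidableEq ι] {E : ι → Type*}
  [∀ i, AddCommGroup (E i)] [∀ i, Module ℂ (E i)] {r m n : ℕ}

/-- The canonical embedding of `ker P̂ i₀` into `ker (P : Σ^m → Σ^n)`,
given by families supported at the single index `i₀`. -/
def embK (Ph : ∀ i, (Fin m → E i) →ₗ[ℂ] (Fin n → E i)) (i₀ : ι)
    (x : ↥(LinearMap.ker (Ph i₀))) : ↥(cohKer Ph (finSupp E)) :=
  ⟨Pi.single i₀ (x : Fin m → E i₀), Submodule.mem_inf.mpr ⟨by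
      intro j
      show {i | (Pi.single i₀ (x : Fin m → E i₀) : ∀ i, Fin m → E i) i j ≠ 0}.Finite
      refine (Set.finite_singleton i₀).subset fun i hi => ?_
      simp only [Set.mem_setOf_eq] at hi
      simp only [Set.mem_singleton_iff]
      by_contra hne
      exact hi (by simp [Pi.single_eq_of_ne hne]),
    LinearMap.mem_ker.mpr (by
      funext i
      by_cases hi : i = i₀
      · subst hi
        simp [LinearMap.mem_ker.mp x.2]
      · simp [Pi.single_eq_of_ne hi])⟩⟩

end Emb

theorem mem_cohRan_of_comp {ι : Type*} {E : ι → Type*}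
    [∀ i, AddCommGroup (E i)] [∀ i, Module ℂ (E i)] {r m : ℕ}
    (Qh : ∀ i, (Fin r → E i) →ₗ[ℂ] (Fin m → E i)) (u : ∀ i, Fin m → E i)
    (hu : u ∈ Vpow (finSupp E) m) (h : ∀ i, u i ∈ LinearMap.range (Qh i)) :
    u ∈ cohRan Qh (finSupp E) := by
  classical
  have h' : ∀ i, ∃ w, Qh i w = u i ∧ (u i = 0 → w = 0) := by
    intro i
    by_cases h0 : u i = 0
    · exact ⟨0, by simp [h0], fun _ => rfl⟩
    · obtain ⟨w, hw⟩ := h i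
      exact ⟨w, hw, fun h1 => absurd h1 h0⟩
  choose w hw hw0 using h'
  refine Submodule.mem_map.mpr ⟨w, ?_, funext fun i => hw i⟩
  intro j
  have hfin : (⋃ k : Fin m, {i | u i k ≠ 0}).Finite := Set.finite_iUnion fun k => hu k
  refine hfin.subset fun i hi => ?_
  by_contra hc
  simp only [Set.mem_iUnion, Set.mem_setOf_eq, not_exists, not_not] at hc
  exact hi (by
    show w i j = 0
    rw [hw0 i (funext hc)]; rfl)

theorem comp_of_mem_cohRan {ι : Type*} {E : ι → Type*}
    [∀ i, AddCommGroup (E i)] [∀ i, Module ℂ (E i)] {r m : ℕ}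
    (Qh : ∀ i, (Fin r → E i) →ₗ[ℂ] (Fin m → E i)) (V : Submodule ℂ (∀ i, E i))
    (u : ∀ i, Fin m → E i) (h : u ∈ cohRan Qh V) (i : ι) :
    u i ∈ LinearMap.range (Qh i) := by
  obtain ⟨w, -, rfl⟩ := Submodule.mem_map.mp h
  exact ⟨w i, rfl⟩

theorem statement_19 {ι : Type*} [Countable ι] [DecidableEq ι] (E : ι → Type*)
    [∀ i, NormedAddCommGroup (E i)] [∀ i, InnerProductSpace ℂ (E i)]
    [∀ i, FiniteDimensional ℂ (E i)] (r m n : ℕ)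
    (Qh : ∀ i, (Fin r → E i) →ₗ[ℂ] (Fin m → E i))
    (Ph : ∀ i, (Fin m → E i) →ₗ[ℂ] (Fin n → E i))
    (hPQ : ∀ i, (Ph i).comp (Qh i) = 0)
    (i₀ : ι) (hfin : FiniteDimensional ℂ (coh Qh Ph (finSupp E))) :
    ∃ f : locCoh Qh Ph i₀ →ₗ[ℂ] coh Qh Ph (finSupp E),
      (∀ x : ↥(LinearMap.ker (Ph i₀)),
        f (Submodule.Quotient.mk x) = Submodule.Quotient.mk (embK Ph i₀ x)) ∧
      Function.Injective f ∧
      (Function.Surjective f ↔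
        ∀ i, i ≠ i₀ → LinearMap.ker (Ph i) = LinearMap.range (Qh i)) := by
  let e : ↥(LinearMap.ker (Ph i₀)) →ₗ[ℂ] ↥(cohKer Ph (finSupp E)) :=
    { toFun := embK Ph i₀
      map_add' := fun x y => Subtype.ext
        (Pi.single_add (f := fun i => Fin m → E i) i₀ (x : Fin m → E i₀) (y : Fin m → E i₀))
      map_smul' := fun c x => Subtype.ext
        (Pi.single_smul (f := fun i => Fin m → E i) i₀ c (x : Fin m → E i₀)) }
  have he : ∀ x, ((e x : ↥(cohKer Ph (finSupp E))) : ∀ i, Fin m → E i) =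
      Pi.single i₀ (x : Fin m → E i₀) := fun x => rfl
  refine ⟨Submodule.mapQ _ _ e ?_, fun x => rfl, ?_, ?_, ?_⟩
  · intro x hx
    rw [Submodule.mem_comap, Submodule.mem_comap]
    refine mem_cohRan_of_comp Qh _ (e x).2.1 fun i => ?_
    rw [Submodule.subtype_apply, he]
    by_cases hi : i = i₀
    · subst hi
      simpa using hx
    · rw [Pi.single_eq_of_ne hi]
      exact Submodule.zero_mem _
  · rw [injective_iff_map_eq_zero]
    intro y hy
    obtain ⟨x, rfl⟩ := Submodule.Quotient.mk_surjective _ y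
    rw [Submodule.mapQ_apply, Submodule.Quotient.mk_eq_zero, Submodule.mem_comap] at hy
    rw [Submodule.Quotient.mk_eq_zero, Submodule.mem_comap]
    have := comp_of_mem_cohRan Qh _ _ hy i₀
    rw [Submodule.subtype_apply, he, Pi.single_eq_same] at this
    exact this
  · intro hs i hi
    apply le_antisymm
    · intro x hx
      obtain ⟨y, hy⟩ := hs (Submodule.Quotient.mk (embK Ph i ⟨x, hx⟩))
      obtain ⟨z, rfl⟩ := Submodule.Quotient.mk_surjective _ y
      rw [Submodule.mapQ_apply, eq_comm, Submodule.Quotient.eq, Submodule.mem_comap] at hy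
      have := comp_of_mem_cohRan Qh _ _ hy i
      rw [Submodule.subtype_apply, Submodule.coe_sub, Pi.sub_apply, he,
        Pi.single_eq_of_ne hi, sub_zero] at this
      simpa [embK] using this
    · exact LinearMap.range_le_ker_iff.mpr (hPQ i)
  · intro h y
    obtain ⟨a, rfl⟩ := Submodule.Quotient.mk_surjective _ y
    refine ⟨Submodule.Quotient.mk ⟨(a : ∀ j, Fin m → E j) i₀, kerMem Ph a i₀⟩, ?_⟩
    rw [Submodule.mapQ_apply, eq_comm, Submodule.Quotient.eq, Submodule.mem_comap]
    refine mem_cohRan_of_comp Qh _ (Subtype.property (a - e _)).1 fun i => ?_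
    rw [Submodule.subtype_apply, Submodule.coe_sub, Pi.sub_apply, he]
    by_cases hi : i = i₀
    · subst hi
      simp
    · rw [Pi.single_eq_of_ne hi, sub_zero, ← h i hi]
      exact kerMem Ph a i
end
end
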